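/- Let ρ : [0,∞) → ℝ be differentiable on (0,∞) with ψ = ρ' and suppose φ(x) = ψ(x)/x is nonincreasing on (0,∞). Define u(x; r) = ρ(r) − (1/2) r ψ(r) + (1/2) φ(r) x². Then u(r; r) = ρ(r) for all r > 0, and u(x; r) ≥ ρ(x) for all x ≥ 0 and r > 0. -/

import Mathlib

/-!
As a function of `t = x ^ 2` the surrogate is affine, and it is the tangent line at `t = r ^ 2` of
`t ↦ ρ (√t)`. That function has derivative `φ (√t) / 2`, which is nonincreasing, so it is concave
on `(0, ∞)` and lies below its tangent lines there. The inequality at `x = 0` follows by letting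
`x ↓ 0`, since a nondecreasing `ρ` is lower semicontinuous at `0`.
-/

open Set Topology

section Semicontinuity

variable {α γ : Type*} [TopologicalSpace α]

lemma lowerSemicontinuousWithinAt_of_monotoneOn_Ici [Preorder α] [Preorder γ] {f : α → γ} {a : α}
    (hf : MonotoneOn f (Ici a)) : LowerSemicontinuousWithinAt f (Ici a) a :=
  fun _ hy ↦ eventually_mem_nhdsWithin.mono fun _ hx ↦ hy.trans_le (hf self_mem_Ici hx hx)

lemma le_of_frequently_le_of_semicontinuousWithinAt [LinearOrder γ] [DenselyOrdered γ]
    {f g : α → γ} {s : Set α} {a : α} (hf : LowerSemicontinuousWithinAt f s a)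
    (hg : UpperSemicontinuousWithinAt g s a) (hfg : ∃ᶠ x in 𝓝[s] a, f x ≤ g x) : f a ≤ g a := by
  by_contra! hlt
  obtain ⟨c, hgc, hcf⟩ := exists_between hlt
  obtain ⟨x, hle, hcfx, hgxc⟩ := (hfg.and_eventually ((hf c hcf).and (hg c hgc))).exists
  exact (hgxc.trans hcfx).not_ge hle

end Semicontinuity

lemma le_tangent_of_concaveOn {S : Set ℝ} {f : ℝ → ℝ} {f' x y : ℝ} (hf : ConcaveOn ℝ S f)
    (hx : x ∈ S) (hy : y ∈ S) (hf' : HasDerivWithinAt f f' S x) :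
    f y ≤ f x + f' * (y - x) := by
  rcases lt_trichotomy x y with hxy | rfl | hyx
  · have hslope := hf.slope_le_of_hasDerivWithinAt hx hy hxy hf'
    rw [slope_def_field, div_le_iff₀ (sub_pos.2 hxy)] at hslope
    linarith
  · simp
  · have hslope := hf.le_slope_of_hasDerivWithinAt hy hx hyx hf'
    rw [slope_def_field, le_div_iff₀ (sub_pos.2 hyx)] at hslope
    linarith

section SquareRoot

variable {ρ ψ : ℝ → ℝ}

lemma hasDerivAt_comp_sqrt {ρ' t : ℝ} (ht : 0 < t) (hρ : HasDerivAt ρ ρ' √t) :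
    HasDerivAt (fun t ↦ ρ √t) (ρ' / √t / 2) t := by
  refine (hρ.comp t (Real.hasDerivAt_sqrt ht.ne')).congr_deriv ?_
  rw [mul_one_div, mul_comm, div_div]

lemma concaveOn_comp_sqrt (hderiv : ∀ x > 0, HasDerivAt ρ (ψ x) x)
    (hφ : AntitoneOn (fun x ↦ ψ x / x) (Ioi 0)) :
    ConcaveOn ℝ (Ioi 0) (fun t ↦ ρ √t) := by
  have hderiv_sqrt : ∀ t ∈ Ioi (0 : ℝ), HasDerivAt (fun t ↦ ρ √t) (ψ √t / √t / 2) t :=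
    fun t ht ↦ hasDerivAt_comp_sqrt ht (hderiv _ (Real.sqrt_pos.2 ht))
  refine AntitoneOn.concaveOn_of_deriv (convex_Ioi 0)
    (fun t ht ↦ (hderiv_sqrt t ht).continuousAt.continuousWithinAt) ?_ ?_
  all_goals rw [interior_Ioi]
  · exact fun t ht ↦ (hderiv_sqrt t ht).differentiableAt.differentiableWithinAt
  · intro s hs t ht hst
    rw [(hderiv_sqrt s hs).deriv, (hderiv_sqrt t ht).deriv]
    have hφ_sqrt : ψ √t / √t ≤ ψ √s / √s :=
      hφ (Real.sqrt_pos.2 hs) (Real.sqrt_pos.2 ht) (Real.sqrt_le_sqrt hst)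
    linarith

end SquareRoot

/-- The quadratic surrogate `u(x; r)` of a loss `ρ` with derivative `ψ`, used to
majorize `ρ`. The weight `φ(r)` is written out as `ψ r / r`, so it is `0` at `r = 0`. -/
noncomputable def quadraticSurrogate (ρ ψ : ℝ → ℝ) (r x : ℝ) : ℝ :=
  ρ r - (1 / 2) * r * ψ r + (1 / 2) * (ψ r / r) * x ^ 2

section Surrogate

variable {ρ ψ : ℝ → ℝ} {r x : ℝ}

lemma quadraticSurrogate_eq_tangent (hr : r ≠ 0) :
    quadraticSurrogate ρ ψ r x = ρ r + ψ r / r / 2 * (x ^ 2 - r ^ 2) := by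
  unfold quadraticSurrogate
  field_simp
  ring

lemma quadraticSurrogate_self (hr : r ≠ 0) : quadraticSurrogate ρ ψ r r = ρ r := by
  rw [quadraticSurrogate_eq_tangent hr, sub_self, mul_zero, add_zero]

lemma continuous_quadraticSurrogate : Continuous (quadraticSurrogate ρ ψ r) := by
  unfold quadraticSurrogate
  fun_prop

lemma le_quadraticSurrogate_of_pos (hderiv : ∀ x > 0, HasDerivAt ρ (ψ x) x)
    (hφ : AntitoneOn (fun x ↦ ψ x / x) (Ioi 0)) (hr : 0 < r) (hx : 0 < x) :
    ρ x ≤ quadraticSurrogate ρ ψ r x := by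
  have hsqrt : √(r ^ 2) = r := Real.sqrt_sq hr.le
  have hderiv_sq : HasDerivAt (fun t ↦ ρ √t) (ψ r / r / 2) (r ^ 2) := by
    simpa only [hsqrt] using hasDerivAt_comp_sqrt (pow_pos hr 2) (hsqrt.symm ▸ hderiv r hr)
  have htangent := le_tangent_of_concaveOn (concaveOn_comp_sqrt hderiv hφ)
    (pow_pos hr 2) (pow_pos hx 2) hderiv_sq.hasDerivWithinAt
  simpa only [hsqrt, Real.sqrt_sq hx.le, quadraticSurrogate_eq_tangent hr.ne'] using htangent

end Surrogate

theorem quadratic_majorization_general {ρ ψ : ℝ → ℝ}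
    (hlsc : LowerSemicontinuousWithinAt ρ (Ici 0) 0)
    (hderiv : ∀ x > 0, HasDerivAt ρ (ψ x) x)
    (hφ : AntitoneOn (fun x ↦ ψ x / x) (Ioi 0)) :
    (∀ r > 0, quadraticSurrogate ρ ψ r r = ρ r) ∧
    (∀ r > 0, ∀ x ≥ 0, ρ x ≤ quadraticSurrogate ρ ψ r x) := by
  refine ⟨fun r hr ↦ quadraticSurrogate_self hr.ne', fun r hr x hx ↦ ?_⟩
  have hpos : ∀ y > 0, ρ y ≤ quadraticSurrogate ρ ψ r y :=
    fun y hy ↦ le_quadraticSurrogate_of_pos hderiv hφ hr hy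
  rcases hx.lt_or_eq with hx | rfl
  · exact hpos x hx
  · have hnear : ∀ᶠ y in 𝓝[>] (0 : ℝ), ρ y ≤ quadraticSurrogate ρ ψ r y :=
      eventually_nhdsWithin_of_forall hpos
    exact le_of_frequently_le_of_semicontinuousWithinAt (hlsc.mono Ioi_subset_Ici_self)
      (continuous_quadraticSurrogate.upperSemicontinuous.upperSemicontinuousWithinAt _ _)
      hnear.frequently

theorem quadratic_majorization
    (ρ ψ : ℝ → ℝ) (hρ0 : ρ 0 = 0) (hmono : MonotoneOn ρ (Set.Ici 0))
    (hderiv : ∀ x > (0 : ℝ), HasDerivAt ρ (ψ x) x)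
    (hψcont : ContinuousOn ψ (Set.Ici 0))
    (hφanti : AntitoneOn (fun x => ψ x / x) (Set.Ioi 0)) :
    (∀ r > (0 : ℝ),
      ρ r - (1 / 2) * r * ψ r + (1 / 2) * (ψ r / r) * r ^ 2 = ρ r) ∧
    (∀ r > (0 : ℝ), ∀ x ≥ (0 : ℝ),
      ρ x ≤ ρ r - (1 / 2) * r * ψ r + (1 / 2) * (ψ r / r) * x ^ 2) :=
  quadratic_majorization_general (lowerSemicontinuousWithinAt_of_monotoneOn_Ici hmono) hderiv hφanti
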